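/- Let D ⊆ Q be simple artinian k-algebras and let U be any division k-algebra. Then the injective dimension of D ⊗_k U as a left module over itself is at most the injective dimension of Q ⊗_k U as a left module over itself. (Hence shtr D ≤ shtr Q, where shtr S := sup over division k-algebras U of injdim(S ⊗_k U).) -/

import Mathlib

open CategoryTheory Limits TensorProduct

universe u

/-- The injective dimension of a module `M`, defined as the least `n : ℕ∞` for which
there is an injective resolution of `M` that vanishes in all cohomological degrees `> n`. -/
noncomputable def ModuleCat.injDim {R : Type u} [Ring R] (M : ModuleCat.{u} R) : ℕ∞ :=
  sInf {n : ℕ∞ | ∃ I : InjectiveResolution M, ∀ i : ℕ, n < (i : ℕ∞) → IsZero (I.cocomplex.X i)}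

/-- The projective dimension of a module `M`, defined as the least `n : ℕ∞` for which
there is a projective resolution of `M` that vanishes in all homological degrees `> n`. -/
noncomputable def ModuleCat.projDim {R : Type u} [Ring R] (M : ModuleCat.{u} R) : ℕ∞ :=
  sInf {n : ℕ∞ | ∃ P : ProjectiveResolution M, ∀ i : ℕ, n < (i : ℕ∞) → IsZero (P.complex.X i)}

/-- The injective dimension of a ring as a left module over itself. -/
noncomputable def Ring.selfInjDim (R : Type u) [Ring R] : ℕ∞ :=
  ModuleCat.injDim (ModuleCat.of R R)

/-- The left global dimension of a ring: the supremum of the projective dimensions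
of all left `R`-modules. -/
noncomputable def Ring.globalDim (R : Type u) [Ring R] : ℕ∞ :=
  ⨆ M : ModuleCat.{u} R, M.projDim

/-!
Since `D` is semisimple, `Q` is projective as a right `D`-module and `D` is a direct summand of `Q`
as a left `D`-module. Dual bases and retractions survive tensoring with `U`, so the same holds for
`S = Q ⊗ U` over `R = D ⊗ U`. A dual basis makes restriction of scalars from `S` to `R` preserve
injectives: for a left ideal `J` of `R`, flatness of `S` identifies `S ⊗ J` with the left ideal
`S J`, so an `R`-linear map `J → M` into an injective `S`-module extends to `S J`, hence to `S`.
Restriction is exact, so it does not raise injective dimension. Therefore `S` has injective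
dimension over `R` at most `injdim S`, and so does its direct summand `R`.
-/

section InjectiveDimension

variable {C : Type*} [Category C] [Abelian C]

theorem hasInjectiveDimensionLE_of_injectiveResolution {X : C} (I : InjectiveResolution X) {n : ℕ}
    (hI : ∀ i, n < i → IsZero (I.cocomplex.X i)) : HasInjectiveDimensionLE X n := by
  let := HasExt.standard C
  refine HasInjectiveDimensionLT.mk fun i hi Y e ↦ ?_
  obtain ⟨f, _, rfl⟩ := I.extMk_surjective e (i + 1) rfl
  obtain rfl : f = 0 := (hI i hi).eq_of_tgt _ _
  exact I.extMk_zero _ _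

/-- The injective resolution given by an exact sequence `0 ⟶ X ⟶ K⁰ ⟶ K¹ ⟶ ⋯` whose terms `Kⁿ`
are injective. -/
noncomputable def injectiveResolutionOfExact {X : C} (K : CochainComplex C ℕ)
    (hK : ∀ n, Injective (K.X n)) (ι : X ⟶ K.X 0) (hι : Mono ι) (w : ι ≫ K.d 0 1 = 0)
    (exact_zero : (ShortComplex.mk ι (K.d 0 1) w).Exact)
    (exact_succ : ∀ n, (ShortComplex.mk (K.d n (n + 1)) (K.d (n + 1) (n + 2))
      (K.d_comp_d _ _ _)).Exact) :
    InjectiveResolution X where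
  cocomplex := K
  injective := hK
  ι := (CochainComplex.fromSingle₀Equiv _ _).symm ⟨ι, w⟩
  quasiIso := ⟨fun n ↦ by
    cases n with
    | zero =>
      rw [CochainComplex.quasiIsoAt₀_iff,
        ShortComplex.quasiIso_iff_of_zeros _ (by rfl) (by rfl) (K.shape _ _ (by simp))]
      refine (ShortComplex.exact_and_mono_f_iff_of_iso ?_).2 ⟨exact_zero, hι⟩
      refine ShortComplex.isoMk (Iso.refl _) (Iso.refl _) (Iso.refl _) ?_ ?_
      · have := CochainComplex.fromSingle₀Equiv_symm_apply_f_zero ι w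
        exact (Category.id_comp _).trans (this.symm.trans (Category.comp_id _).symm)
      · exact (Category.id_comp _).trans (Category.comp_id _).symm
    | succ n =>
      rw [quasiIsoAt_iff_exactAt _ _ (CochainComplex.exactAt_succ_single_obj _ _),
        HomologicalComplex.exactAt_iff' _ n (n + 1) (n + 2) (by simp) (by simp)]
      exact exact_succ n⟩

theorem exact_comp_mono {S : ShortComplex C} (hS : S.Exact) {Y : C} (j : S.X₃ ⟶ Y) [Mono j] :
    (ShortComplex.mk S.f (S.g ≫ j) (by simp)).Exact := by
  let α : S ⟶ ShortComplex.mk S.f (S.g ≫ j) (by simp) := { τ₁ := 𝟙 _, τ₂ := 𝟙 _, τ₃ := j }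
  have : Mono α.τ₃ := ‹Mono j›
  exact (ShortComplex.exact_iff_of_epi_of_isIso_of_mono α).1 hS

theorem exact_epi_comp {S : ShortComplex C} (hS : S.Exact) {Y : C} (p : Y ⟶ S.X₁) [Epi p] :
    (ShortComplex.mk (p ≫ S.f) S.g (by simp)).Exact := by
  let α : ShortComplex.mk (p ≫ S.f) S.g (by simp) ⟶ S := { τ₁ := p, τ₂ := 𝟙 _, τ₃ := 𝟙 _ }
  have : Epi α.τ₁ := ‹Epi p›
  exact (ShortComplex.exact_iff_of_epi_of_isIso_of_mono α).2 hS

/-- The augmentation `X ⟶ I⁰` of an injective resolution `I` of `X`: the degree `0` component of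
`I.ι`, with `X` in place of the degree `0` term of the complex concentrated at `X`. -/
def augmentation {X : C} (I : InjectiveResolution X) : X ⟶ I.cocomplex.X 0 :=
  I.ι.f 0

instance {X : C} (I : InjectiveResolution X) : Mono (augmentation I) :=
  inferInstanceAs (Mono (I.ι.f 0))

theorem augmentation_comp_d {X : C} (I : InjectiveResolution X) :
    augmentation I ≫ I.cocomplex.d 0 1 = 0 :=
  I.ι_f_zero_comp_complex_d

theorem exact_augmentation {X : C} (I : InjectiveResolution X) :
    (ShortComplex.mk _ _ (augmentation_comp_d I)).Exact :=
  I.exact₀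

/-- The splice of a short exact sequence `0 ⟶ X₁ ⟶ X₂ ⟶ X₃ ⟶ 0` with `X₂` injective and an
injective resolution of `X₃`: an injective resolution of `X₁` beginning with `X₂`. -/
noncomputable def spliceInjectiveResolution {S : ShortComplex C} (hS : S.ShortExact)
    (hX₂ : Injective S.X₂) (J : InjectiveResolution S.X₃) : InjectiveResolution S.X₁ :=
  have : Epi S.g := hS.epi_g
  injectiveResolutionOfExact
    (J.cocomplex.augment (S.g ≫ augmentation J) (by simp [augmentation_comp_d]))
    (fun | 0 => hX₂ | n + 1 => J.injective n)
    S.f hS.mono_f ((S.zero_assoc _).trans zero_comp)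
    (exact_comp_mono hS.exact (augmentation J))
    (fun | 0 => exact_epi_comp (exact_augmentation J) S.g | n + 1 => J.exact_succ n)

theorem exists_injectiveResolution_of_hasInjectiveDimensionLE [EnoughInjectives C] {n : ℕ} (X : C)
    [hX : HasInjectiveDimensionLE X n] :
    ∃ I : InjectiveResolution X, ∀ i, n < i → IsZero (I.cocomplex.X i) := by
  induction n generalizing X with
  | zero =>
    have : Injective X := injective_iff_hasInjectiveDimensionLT_one.2 hX
    exact ⟨InjectiveResolution.self X,
      fun i hi ↦ HomologicalComplex.isZero_single_obj_X _ _ _ _ hi.ne'⟩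
  | succ n ih =>
    obtain ⟨P⟩ := EnoughInjectives.presentation X
    have hP := P.shortExact_shortComplex
    have := (hP.hasInjectiveDimensionLT_X₃_iff n P.injective).2 hX
    obtain ⟨J, hJ⟩ := ih P.shortComplex.X₃
    refine ⟨spliceInjectiveResolution hP P.injective J, ?_⟩
    rintro (_ | i) hi
    · omega
    · exact hJ i (by omega)

theorem hasInjectiveDimensionLE_obj {D : Type*} [Category D] [Abelian D] [EnoughInjectives C]
    (F : C ⥤ D) [F.Additive] [PreservesFiniteLimits F] [PreservesFiniteColimits F]
    [F.PreservesInjectiveObjects] {n : ℕ} (X : C) [hX : HasInjectiveDimensionLE X n] :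
    HasInjectiveDimensionLE (F.obj X) n := by
  induction n generalizing X with
  | zero =>
    have : Injective X := injective_iff_hasInjectiveDimensionLT_one.2 hX
    exact injective_iff_hasInjectiveDimensionLT_one.1 (F.injective_obj X)
  | succ n ih =>
    obtain ⟨P⟩ := EnoughInjectives.presentation X
    have hP := P.shortExact_shortComplex
    have := (hP.hasInjectiveDimensionLT_X₃_iff n P.injective).2 hX
    have hFJ : Injective (F.obj P.J) := F.injective_obj_of_injective P.injective
    exact ((hP.map_of_exact F).hasInjectiveDimensionLT_X₃_iff n hFJ).1 (ih P.shortComplex.X₃)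

theorem injDim_le_natCast_iff {R : Type u} [Ring R] {M : ModuleCat.{u} R} {n : ℕ} :
    M.injDim ≤ n ↔ HasInjectiveDimensionLE M n := by
  constructor
  · intro h
    obtain ⟨I, hI⟩ := csInf_mem (s := {m : ℕ∞ | ∃ I : InjectiveResolution M,
      ∀ i : ℕ, m < i → IsZero (I.cocomplex.X i)}) ⟨⊤, InjectiveResolution.of M, by simp⟩
    exact hasInjectiveDimensionLE_of_injectiveResolution I fun i hi ↦
      hI i (h.trans_lt (Nat.cast_lt.2 hi))
  · intro h
    obtain ⟨I, hI⟩ := exists_injectiveResolution_of_hasInjectiveDimensionLE (n := n) M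
    exact sInf_le ⟨I, fun i hi ↦ hI i (Nat.cast_lt.1 hi)⟩

end InjectiveDimension

section RingHom

variable {R S : Type*} [Ring R] [Ring S]

/-- A dual basis of `S` as a right `R`-module via `f : R →+* S`. By the dual basis lemma it exists
exactly when this right module is projective; it carries that property without putting an
`Rᵐᵒᵖ`-module structure on `S`. -/
structure RightDualBasis (f : R →+* S) (ι : Type*) where
  vec : ι → S
  coord : S →+ ι →₀ R
  coord_mul_map : ∀ x r i, coord (x * f r) i = coord x i * r
  sum_vec_mul_coord : ∀ x, ((coord x).sum fun i r ↦ vec i * f r) = x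

/-- An additive map `S →+ R` exhibiting `R` as a direct summand of `S` as left `R`-modules, where
`R` acts on `S` through `f : R →+* S`. -/
structure LeftRetraction (f : R →+* S) where
  proj : S →+ R
  proj_map_mul : ∀ r x, proj (f r * x) = r * proj x
  proj_one : proj 1 = 1

theorem exists_comp_eq_of_baer_of_ker_le {M N P : Type*}
    [AddCommGroup M] [AddCommGroup N] [AddCommGroup P] [Module R M] [Module R N] [Module R P]
    (hM : Module.Baer R M) (p : N →ₗ[R] P) (h : N →ₗ[R] M)
    (hker : LinearMap.ker p ≤ LinearMap.ker h) : ∃ G : P →ₗ[R] M, G ∘ₗ p = h := by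
  have hinj : Function.Injective ((LinearMap.ker p).liftQ p le_rfl) :=
    LinearMap.ker_eq_bot.1 (Submodule.ker_liftQ_eq_bot _ _ _ le_rfl)
  obtain ⟨G, hG⟩ := hM.extension_property _ hinj ((LinearMap.ker p).liftQ h hker)
  refine ⟨G, ?_⟩
  ext n
  simpa using LinearMap.congr_fun hG (Submodule.Quotient.mk n)

theorem nonempty_rightDualBasis [IsSemisimpleRing R] (f : R →+* S) :
    Nonempty (RightDualBasis f S) := by
  let : Module Rᵐᵒᵖ S := Module.compHom S f.op
  have : Module.Projective Rᵐᵒᵖ S := Module.projective_of_isSemisimpleRing Rᵐᵒᵖ S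
  obtain ⟨s, hs⟩ := Module.projective_def'.1 this
  refine ⟨⟨id, (Finsupp.mapRange.addMonoidHom MulOpposite.opAddEquiv.symm.toAddMonoidHom).comp
    s.toAddMonoidHom, fun x r i ↦ ?_, fun x ↦ ?_⟩⟩
  · exact congrArg (fun c : S →₀ Rᵐᵒᵖ ↦ (c i).unop) (s.map_smul (MulOpposite.op r) x)
  · have hx := LinearMap.congr_fun hs x
    rw [LinearMap.comp_apply, Finsupp.linearCombination_apply] at hx
    exact (Finsupp.sum_mapRange_index (hf := map_zero _) (by simp)).trans hx

theorem nonempty_leftRetraction [IsSemisimpleRing R] (f : R →+* S) (hf : Function.Injective f) :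
    Nonempty (LeftRetraction f) := by
  let : Module R S := Module.compHom S f
  let g : R →ₗ[R] S := { f with map_smul' := map_mul f }
  obtain ⟨π, hπ⟩ := IsSemisimpleModule.extension_property g hf LinearMap.id
  refine ⟨⟨π.toAddMonoidHom, π.map_smul, ?_⟩⟩
  simpa [g] using LinearMap.congr_fun hπ 1

namespace RightDualBasis

variable {f : R →+* S} {ι : Type*} (b : RightDualBasis f ι)

include b in
theorem sum_smul_map_eq_zero {M α : Type*} [AddCommGroup M] [Module R M] [Module S M]
    (hsmul : ∀ (r : R) (m : M), r • m = f r • m) {J : Ideal R} (g : J →ₗ[R] M) {t : Finset α}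
    {s : α → S} {x : α → J} (h : ∑ a ∈ t, s a * f (x a) = 0) : ∑ a ∈ t, s a • g (x a) = 0 := by
  classical
  let T := t.biUnion fun a ↦ (b.coord (s a)).support
  have expand (a) (ha : a ∈ t) : s a = ∑ i ∈ T, b.vec i * f (b.coord (s a) i) := by
    conv_lhs => rw [← b.sum_vec_mul_coord (s a)]
    exact Finsupp.sum_of_support_subset _
      (Finset.subset_biUnion_of_mem (fun a ↦ (b.coord (s a)).support) ha) _ (by simp)
  have coord_eq_zero (i) : ∑ a ∈ t, b.coord (s a) i • x a = 0 := by
    have := congrArg (fun y ↦ b.coord y i) h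
    simpa [Subtype.ext_iff, b.coord_mul_map] using this
  calc ∑ a ∈ t, s a • g (x a)
      = ∑ a ∈ t, ∑ i ∈ T, b.vec i • g (b.coord (s a) i • x a) := by
        refine Finset.sum_congr rfl fun a ha ↦ ?_
        conv_lhs => rw [expand a ha]
        simp only [Finset.sum_smul, mul_smul, map_smul, hsmul]
    _ = ∑ i ∈ T, b.vec i • g (∑ a ∈ t, b.coord (s a) i • x a) := by
        rw [Finset.sum_comm]
        simp only [map_sum, Finset.smul_sum]
    _ = 0 := by simp [coord_eq_zero]

include b in
theorem baer_of_baer {M : Type*} [AddCommGroup M] [Module R M] [Module S M]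
    (hsmul : ∀ (r : R) (m : M), r • m = f r • m) (hM : Module.Baer S M) : Module.Baer R M := by
  intro J g
  let p : (J →₀ S) →ₗ[S] S := Finsupp.linearCombination S fun x ↦ f x
  let h : (J →₀ S) →ₗ[S] M := Finsupp.linearCombination S g
  have hker : LinearMap.ker p ≤ LinearMap.ker h := fun c hc ↦
    b.sum_smul_map_eq_zero hsmul g (t := c.support) (s := c) (x := id) hc
  obtain ⟨G, hG⟩ := exists_comp_eq_of_baer_of_ker_le hM p h hker
  refine ⟨{ toFun := fun r ↦ G (f r), map_add' := by simp, map_smul' := fun r x ↦ ?_ }, ?_⟩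
  · rw [smul_eq_mul, map_mul, ← smul_eq_mul, map_smul, RingHom.id_apply, hsmul]
  · intro x hx
    simpa [p, h] using LinearMap.congr_fun hG (Finsupp.single ⟨x, hx⟩ 1)

end RightDualBasis

end RingHom

theorem RightDualBasis.preservesInjectiveObjects_restrictScalars {R S : Type u} [Ring R] [Ring S]
    {f : R →+* S} {ι : Type*} (b : RightDualBasis f ι) :
    (ModuleCat.restrictScalars.{u} f).PreservesInjectiveObjects where
  injective_obj {M} hM := by
    rw [← Module.injective_iff_injective_object] at hM ⊢
    let : Module S ((ModuleCat.restrictScalars f).obj M) := M.isModule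
    exact (b.baer_of_baer (M := (ModuleCat.restrictScalars f).obj M) (fun _ _ ↦ rfl)
      (Module.Baer.of_injective (Q := M) hM)).injective

/-- The retraction of left modules underlying a `LeftRetraction`. -/
noncomputable def LeftRetraction.retract {R S : Type u} [Ring R] [Ring S] {f : R →+* S}
    (π : LeftRetraction f) :
    Retract (ModuleCat.of R R) ((ModuleCat.restrictScalars.{u} f).obj (ModuleCat.of S S)) where
  i := ModuleCat.ofHom (Y := (ModuleCat.restrictScalars f).obj (ModuleCat.of S S))
    { f with map_smul' := map_mul f }
  r := ModuleCat.ofHom (X := (ModuleCat.restrictScalars f).obj (ModuleCat.of S S))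
    { π.proj with map_smul' := π.proj_map_mul }
  retract := by
    ext
    exact (congrArg π.proj (map_one f)).trans π.proj_one

theorem selfInjDim_le_of_rightDualBasis_of_leftRetraction {R S : Type u} [Ring R] [Ring S]
    {f : R →+* S} {ι : Type*} (b : RightDualBasis f ι) (π : LeftRetraction f) :
    Ring.selfInjDim R ≤ Ring.selfInjDim S := by
  have := b.preservesInjectiveObjects_restrictScalars
  have : PreservesFiniteLimits (ModuleCat.restrictScalars.{u} f) := ⟨fun _ _ _ ↦ ⟨inferInstance⟩⟩
  have : PreservesFiniteColimits (ModuleCat.restrictScalars.{u} f) := ⟨fun _ _ _ ↦ ⟨inferInstance⟩⟩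
  refine WithTop.forall_le_coe_iff_le.1 fun n hn ↦ ?_
  have : HasInjectiveDimensionLE (ModuleCat.of S S) n := injDim_le_natCast_iff.1 hn
  have := hasInjectiveDimensionLE_obj (n := n) (ModuleCat.restrictScalars.{u} f) (ModuleCat.of S S)
  exact injDim_le_natCast_iff.2 (π.retract.hasInjectiveDimensionLT (n + 1))

section TensorProduct

variable {k D Q : Type*} [CommRing k] [Ring D] [Ring Q] [Algebra k D] [Algebra k Q]
  {f : D →ₐ[k] Q}

namespace RightDualBasis

variable {ι : Type*} (b : RightDualBasis (f : D →+* Q) ι)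

/-- The coordinates of a dual basis of a `k`-algebra over another one, as a `k`-linear map. -/
noncomputable def coordₗ : Q →ₗ[k] ι →₀ D where
  toFun := b.coord
  map_add' := map_add b.coord
  map_smul' c q := by
    ext i
    have := b.coord_mul_map q (algebraMap k D c) i
    simpa [← Algebra.commutes c, ← Algebra.smul_def] using this

variable (U : Type*) [Ring U] [Algebra k U]

open Classical in
/-- The coordinates of `Q ⊗ U` over `D ⊗ U` obtained from those of `Q` over `D` by acting on the
left factor. -/
noncomputable def coordTensor : Q ⊗[k] U →ₗ[k] ι →₀ D ⊗[k] U :=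
  (TensorProduct.finsuppLeft k k D U ι).toLinearMap ∘ₗ LinearMap.rTensor U b.coordₗ

theorem coordTensor_tmul (q : Q) (u : U) :
    b.coordTensor U (q ⊗ₜ u) = (b.coord q).mapRange (· ⊗ₜ[k] u) (by simp) := by
  ext i
  simp [coordTensor, coordₗ]

theorem coordTensor_mul_map (x : Q ⊗[k] U) (r : D ⊗[k] U) (i : ι) :
    b.coordTensor U (x * Algebra.TensorProduct.map f (AlgHom.id k U) r) i =
      b.coordTensor U x i * r := by
  induction x using TensorProduct.induction_on with
  | zero => simp
  | add x y hx hy => simp only [add_mul, map_add, Finsupp.add_apply, hx, hy]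
  | tmul q u =>
    induction r using TensorProduct.induction_on with
    | zero => simp
    | add r s hr hs => simp only [mul_add, map_add, Finsupp.add_apply, hr, hs]
    | tmul d v =>
      simpa [coordTensor_tmul] using congrArg (· ⊗ₜ[k] (u * v)) (b.coord_mul_map q d i)

theorem sum_vec_tmul_mul_coordTensor (x : Q ⊗[k] U) :
    ((b.coordTensor U x).sum fun i r ↦
      b.vec i ⊗ₜ 1 * Algebra.TensorProduct.map f (AlgHom.id k U) r) = x := by
  induction x using TensorProduct.induction_on with
  | zero => simp
  | add x y hx hy => rw [map_add, Finsupp.sum_add_index' (by simp) (by simp [mul_add]), hx, hy]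
  | tmul q u =>
    rw [coordTensor_tmul, Finsupp.sum_mapRange_index (by simp)]
    conv_rhs => rw [← b.sum_vec_mul_coord q]
    simp [Finsupp.sum, TensorProduct.sum_tmul]

/-- The dual basis of `Q ⊗ U` over `D ⊗ U` obtained from a dual basis of `Q` over `D` by scalar
extension. -/
noncomputable def tensorMap :
    RightDualBasis (Algebra.TensorProduct.map f (AlgHom.id k U) : D ⊗[k] U →+* Q ⊗[k] U) ι where
  vec i := b.vec i ⊗ₜ 1
  coord := (b.coordTensor U).toAddMonoidHom
  coord_mul_map := b.coordTensor_mul_map U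
  sum_vec_mul_coord := b.sum_vec_tmul_mul_coordTensor U

end RightDualBasis

namespace LeftRetraction

variable (π : LeftRetraction (f : D →+* Q))

/-- The projection of a left retraction between `k`-algebras, as a `k`-linear map. -/
def projₗ : Q →ₗ[k] D where
  toFun := π.proj
  map_add' := map_add π.proj
  map_smul' c q := by
    have := π.proj_map_mul (algebraMap k D c) q
    simpa [← Algebra.smul_def] using this

variable (U : Type*) [Ring U] [Algebra k U]

theorem rTensor_projₗ_map_mul (r : D ⊗[k] U) (x : Q ⊗[k] U) :
    π.projₗ.rTensor U (Algebra.TensorProduct.map f (AlgHom.id k U) r * x) =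
      r * π.projₗ.rTensor U x := by
  induction x using TensorProduct.induction_on with
  | zero => simp
  | add x y hx hy => simp only [mul_add, map_add, hx, hy]
  | tmul q u =>
    induction r using TensorProduct.induction_on with
    | zero => simp
    | add r s hr hs => simp only [add_mul, map_add, hr, hs]
    | tmul d v => simpa [projₗ] using congrArg (· ⊗ₜ[k] (v * u)) (π.proj_map_mul d q)

/-- The retraction of `Q ⊗ U` onto `D ⊗ U` obtained from a retraction of `Q` onto `D` by scalar
extension. -/
noncomputable def tensorMap :
    LeftRetraction (Algebra.TensorProduct.map f (AlgHom.id k U) : D ⊗[k] U →+* Q ⊗[k] U) where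
  proj := (π.projₗ.rTensor U).toAddMonoidHom
  proj_map_mul := π.rTensor_projₗ_map_mul U
  proj_one := by simp [Algebra.TensorProduct.one_def, projₗ, π.proj_one]

end LeftRetraction

end TensorProduct

theorem stmt_7_general (k : Type*) [CommRing k] (D Q U : Type u) [Ring D] [Ring Q] [Ring U]
    [Algebra k D] [Algebra k Q] [Algebra k U] [IsSemisimpleRing D]
    (f : D →ₐ[k] Q) (hf : Function.Injective f) :
    Ring.selfInjDim (D ⊗[k] U) ≤ Ring.selfInjDim (Q ⊗[k] U) := by
  obtain ⟨b⟩ := nonempty_rightDualBasis (f : D →+* Q)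
  obtain ⟨π⟩ := nonempty_leftRetraction (f : D →+* Q) hf
  exact selfInjDim_le_of_rightDualBasis_of_leftRetraction (b.tensorMap U) (π.tensorMap U)

/-!
Statement 7 (Proposition 1.7(a)): if `D ⊆ Q` are simple artinian `k`-algebras and `U` is any
division `k`-algebra, then `injdim (D ⊗[k] U) ≤ injdim (Q ⊗[k] U)` (injective dimension of
each ring as a left module over itself).
-/

theorem stmt_7 (k : Type u) [Field k] (D Q U : Type u) [Ring D] [Ring Q]
    [Algebra k D] [Algebra k Q]
    [IsSimpleRing D] [IsArtinianRing D] [IsSimpleRing Q] [IsArtinianRing Q]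
    [DivisionRing U] [Algebra k U]
    (f : D →ₐ[k] Q) (hf : Function.Injective f) :
    Ring.selfInjDim (D ⊗[k] U) ≤ Ring.selfInjDim (Q ⊗[k] U) := by
  exact stmt_7_general k D Q U f hf
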